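/- Define, for k ∈ (0,1), Y(k) = −√(ι₄(k)) and W(k) = (k⁴K(k)(1 − k²) − ι₄(k)(8 − 9k² + k⁴))/(12 ι₄(k)^{3/2}(1 − k²)), where ι₄(k) = (2 − k²)K(k) − 2E(k). Then Y is strictly decreasing on (0,1) and W is strictly increasing on (0,1); moreover Y(k) → 0 and W(k) → −1/√π as k → 0⁺, while Y(k) → −∞ and W(k) → 0 as k → 1⁻. Consequently the parametric curve {(Y(k), W(k)) : k ∈ (0,1)} is the graph of a function W = W_conj^{22−}(Y) strictly decreasing from 0 to −1/√π on Y ∈ (−∞, 0). -/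

import Mathlib

open Real Set Filter Topology

/-- Complete elliptic integral of the first kind. -/
noncomputable def K (k : ℝ) : ℝ :=
  ∫ t in (0:ℝ)..(π/2), 1 / Real.sqrt (1 - k^2 * Real.sin t ^ 2)

/-- Complete elliptic integral of the second kind. -/
noncomputable def E (k : ℝ) : ℝ :=
  ∫ t in (0:ℝ)..(π/2), Real.sqrt (1 - k^2 * Real.sin t ^ 2)

noncomputable def ι₄ (k : ℝ) : ℝ := (2 - k^2) * K k - 2 * E k

noncomputable def Y22m (k : ℝ) : ℝ := -Real.sqrt (ι₄ k)

noncomputable def W22m (k : ℝ) : ℝ :=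
  (k^4 * K k * (1 - k^2) - ι₄ k * (8 - 9 * k^2 + k^4)) /
    (12 * (ι₄ k) ^ ((3:ℝ)/2) * (1 - k^2))

/-- Auxiliary integrals `J j m = ∫ sin^{2j} (1 - m sin²)^{-(j+1/2)}`. -/
noncomputable def Jint (j : ℕ) (m : ℝ) : ℝ :=
  ∫ t in (0:ℝ)..(π/2), Real.sin t ^ (2*j) * (1 - m * Real.sin t ^ 2) ^ (-((j:ℝ) + 1/2))

lemma base_pos {m : ℝ} (hm : m < 1) (t : ℝ) : 0 < 1 - m * Real.sin t ^ 2 := by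
  have h1 := Real.sin_sq_le_one t
  have h2 := sq_nonneg (Real.sin t)
  rcases le_or_gt m 0 with h | h
  · nlinarith
  · nlinarith

lemma Jint_cont {m : ℝ} (hm : m < 1) (j : ℕ) (s : ℝ) :
    Continuous (fun t : ℝ => Real.sin t ^ (2*j) * (1 - m * Real.sin t ^ 2) ^ s) := by
  refine Continuous.mul (by fun_prop) ?_
  refine Continuous.rpow_const (by fun_prop) (fun t => Or.inl (base_pos hm t).ne')

lemma Jint_hasDerivAt (j : ℕ) {m : ℝ} (hm : m < 1) :
    HasDerivAt (Jint j) (((j:ℝ) + 1/2) * Jint (j+1) m) m := by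
  have hnb : Iio ((1 + m)/2) ∈ 𝓝 m := Iio_mem_nhds (by linarith)
  have hlt : ∀ x ∈ Iio ((1+m)/2), x < 1 := fun x hx => by
    have : x < (1+m)/2 := hx
    linarith
  set d : ℝ := min 1 (1 - (1+m)/2) with hd
  have hd0 : 0 < d := lt_min one_pos (by linarith)
  have hbase : ∀ x ∈ Iio ((1+m)/2), ∀ t : ℝ, d ≤ 1 - x * Real.sin t ^ 2 := by
    intro x hx t
    have hx' : x < (1+m)/2 := hx
    have h1 := Real.sin_sq_le_one t
    have h2 := sq_nonneg (Real.sin t)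
    have h3 : d ≤ 1 := min_le_left _ _
    have h4 : d ≤ 1 - (1+m)/2 := min_le_right _ _
    rcases le_or_gt x 0 with h | h
    · nlinarith
    · nlinarith
  have key := intervalIntegral.hasDerivAt_integral_of_dominated_loc_of_deriv_le
    (μ := MeasureTheory.volume) (a := 0) (b := π/2) (x₀ := m) (s := Iio ((1+m)/2))
    (F := fun m t => Real.sin t ^ (2*j) * (1 - m * Real.sin t ^ 2) ^ (-((j:ℝ) + 1/2)))
    (F' := fun m t => ((j:ℝ) + 1/2) * (Real.sin t ^ (2*(j+1)) * (1 - m * Real.sin t ^ 2) ^ (-(((j+1:ℕ):ℝ) + 1/2))))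
    (bound := fun _ => ((j:ℝ) + 1/2) * d ^ (-(((j+1:ℕ):ℝ) + 1/2)))
    hnb ?_ ?_ ?_ ?_ ?_ ?_
  · have := key.2
    simp only [intervalIntegral.integral_const_mul] at this
    exact this
  · filter_upwards [hnb] with x hx
    exact (Jint_cont (hlt x hx) j _).aestronglyMeasurable
  · exact (Jint_cont hm j _).intervalIntegrable _ _
  · exact (continuous_const.mul (Jint_cont hm (j+1) _)).aestronglyMeasurable
  · refine Eventually.of_forall fun t _ x hx => ?_
    have hb := hbase x hx t
    have hb0 : 0 < 1 - x * Real.sin t ^ 2 := base_pos (hlt x hx) t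
    rw [Real.norm_eq_abs, abs_of_nonneg]
    · have e1 : Real.sin t ^ (2*(j+1)) ≤ 1 := by
        rw [pow_mul]; exact pow_le_one₀ (sq_nonneg _) (Real.sin_sq_le_one t)
      have e2 : (1 - x * Real.sin t ^ 2) ^ (-(((j+1:ℕ):ℝ) + 1/2)) ≤ d ^ (-(((j+1:ℕ):ℝ) + 1/2)) :=
        Real.rpow_le_rpow_of_nonpos hd0 hb (by
          have : (0:ℝ) ≤ ((j+1:ℕ):ℝ) := Nat.cast_nonneg _
          linarith)
      have e3 : 0 ≤ (1 - x * Real.sin t ^ 2) ^ (-(((j+1:ℕ):ℝ) + 1/2)) := Real.rpow_nonneg hb0.le _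
      have e4 : (0:ℝ) ≤ (j:ℝ) + 1/2 := by positivity
      refine mul_le_mul_of_nonneg_left ?_ e4
      calc _ ≤ 1 * (1 - x * Real.sin t ^ 2) ^ (-(((j+1:ℕ):ℝ) + 1/2)) :=
            mul_le_mul_of_nonneg_right e1 e3
        _ ≤ _ := by rw [one_mul]; exact e2
    · have : 0 ≤ Real.sin t ^ (2*(j+1)) := by rw [pow_mul]; positivity
      positivity
  · exact intervalIntegrable_const
  · refine Eventually.of_forall fun t _ x hx => ?_
    have hb0 : 0 < 1 - x * Real.sin t ^ 2 := base_pos (hlt x hx) t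
    have h1 : HasDerivAt (fun x : ℝ => 1 - x * Real.sin t ^ 2) (-(Real.sin t ^ 2)) x := by
      simpa using ((hasDerivAt_id x).mul_const (Real.sin t ^ 2)).const_sub 1
    have h2 := (h1.rpow_const (p := -((j:ℝ) + 1/2)) (Or.inl hb0.ne')).const_mul (Real.sin t ^ (2*j))
    refine h2.congr_deriv ?_
    have : -((j:ℝ) + 1/2) - 1 = -(((j+1:ℕ):ℝ) + 1/2) := by push_cast; ring
    rw [this]; ring

lemma rpow_step {x : ℝ} (hx : 0 < x) (s : ℝ) : x ^ (s+1) = x ^ s * x := by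
  rw [Real.rpow_add hx, Real.rpow_one]

/-- total derivative used for the contiguous relation -/
lemma total_deriv (j : ℕ) {m : ℝ} (hm : m < 1) (t : ℝ) (s : ℝ) :
    HasDerivAt (fun t => Real.sin t ^ (2*j+1) * Real.cos t * (1 - m * Real.sin t ^ 2) ^ (s+1))
      (Real.sin t ^ (2*j) * (1 - m * Real.sin t ^ 2) ^ s *
        (((2*j+1) * Real.cos t ^ 2 - Real.sin t ^ 2) * (1 - m * Real.sin t ^ 2)
          - 2 * (s+1) * m * Real.sin t ^ 2 * Real.cos t ^ 2)) t := by
  have hb0 := base_pos hm t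
  have h1 : HasDerivAt (fun t : ℝ => 1 - m * Real.sin t ^ 2) (-(m * (2 * Real.sin t * Real.cos t))) t := by
    have := (((Real.hasDerivAt_sin t).pow 2).const_mul m).const_sub 1
    simpa using this
  have h2 := h1.rpow_const (p := s+1) (Or.inl hb0.ne')
  have h3 := (((Real.hasDerivAt_sin t).pow (2*j+1)).mul (Real.hasDerivAt_cos t)).mul h2
  refine h3.congr_deriv ?_
  simp only [Pi.mul_apply, Pi.pow_apply]
  rw [rpow_step hb0]
  have : s + 1 - 1 = s := by ring
  rw [this]
  push_cast
  ring

lemma total_int (j : ℕ) {m : ℝ} (hm : m < 1) (s : ℝ) :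
    ∫ t in (0:ℝ)..(π/2), (Real.sin t ^ (2*j) * (1 - m * Real.sin t ^ 2) ^ s *
        (((2*j+1) * Real.cos t ^ 2 - Real.sin t ^ 2) * (1 - m * Real.sin t ^ 2)
          - 2 * (s+1) * m * Real.sin t ^ 2 * Real.cos t ^ 2)) = 0 := by
  rw [intervalIntegral.integral_eq_sub_of_hasDerivAt (fun t _ => total_deriv j hm t s)]
  · simp
  · exact ((Jint_cont hm j s).mul (by fun_prop)).intervalIntegrable _ _

lemma Jint_rec (j : ℕ) {m : ℝ} (hm : m < 1) :
    m * (1-m) * ((j:ℝ) + 3/2) * Jint (j+2) m + ((j:ℝ)+1) * (1 - 2*m) * Jint (j+1) m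
      = ((j:ℝ) + 1/2) * Jint j m := by
  have h0 := total_int j hm (-(((j+2:ℕ):ℝ) + 1/2))
  have i0 := (Jint_cont hm j (-((j:ℝ) + 1/2))).intervalIntegrable (μ := MeasureTheory.volume) 0 (π/2)
  have i1 := (Jint_cont hm (j+1) (-(((j+1:ℕ):ℝ) + 1/2))).intervalIntegrable (μ := MeasureTheory.volume) 0 (π/2)
  have i2 := (Jint_cont hm (j+2) (-(((j+2:ℕ):ℝ) + 1/2))).intervalIntegrable (μ := MeasureTheory.volume) 0 (π/2)
  have e : m * (1-m) * ((j:ℝ) + 3/2) * Jint (j+2) m + ((j:ℝ)+1) * (1 - 2*m) * Jint (j+1) m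
      - ((j:ℝ) + 1/2) * Jint j m = (-1/2) * 0 := by
    rw [← h0, Jint, Jint, Jint, ← intervalIntegral.integral_const_mul,
      ← intervalIntegral.integral_const_mul, ← intervalIntegral.integral_const_mul,
      ← intervalIntegral.integral_const_mul,
      ← intervalIntegral.integral_add (i2.const_mul _) (i1.const_mul _),
      ← intervalIntegral.integral_sub ((i2.const_mul _).add (i1.const_mul _)) (i0.const_mul _)]
    refine intervalIntegral.integral_congr fun t _ => ?_
    have hb0 := base_pos hm t
    have a1 : -(((j+1:ℕ):ℝ) + 1/2) = -(((j+2:ℕ):ℝ) + 1/2) + 1 := by push_cast; ring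
    have a0 : -((j:ℝ) + 1/2) = -(((j+2:ℕ):ℝ) + 1/2) + 1 + 1 := by push_cast; ring
    rw [a0, a1]
    simp only [rpow_step hb0]
    generalize (1 - m * Real.sin t ^ 2) ^ (-(((j+2:ℕ):ℝ) + 1/2)) = A
    rw [Real.cos_sq']
    push_cast
    ring
  linarith

lemma K_eq {k : ℝ} (hk : k^2 < 1) : K k = Jint 0 (k^2) := by
  unfold K Jint
  refine intervalIntegral.integral_congr fun t _ => ?_
  have hb0 := base_pos hk t
  rw [Real.rpow_neg hb0.le, Real.sqrt_eq_rpow]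
  simp

lemma E_eq {k : ℝ} (hk : k^2 < 1) :
    E k = (1-k^2) * Jint 0 (k^2) + k^2*(1-k^2) * Jint 1 (k^2) := by
  have h0 := total_int 0 hk (-(((1:ℕ):ℝ) + 1/2))
  have i0 := (Jint_cont hk 0 (-(((0:ℕ):ℝ) + 1/2))).intervalIntegrable (μ := MeasureTheory.volume) 0 (π/2)
  have i1 := (Jint_cont hk 1 (-(((1:ℕ):ℝ) + 1/2))).intervalIntegrable (μ := MeasureTheory.volume) 0 (π/2)
  have i2 : IntervalIntegrable (fun t : ℝ => Real.sqrt (1 - k^2 * Real.sin t ^ 2)) MeasureTheory.volume 0 (π/2) :=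
    Continuous.intervalIntegrable (by fun_prop) _ _
  have e : E k - (1-k^2) * Jint 0 (k^2) - k^2*(1-k^2) * Jint 1 (k^2) = k^2 * 0 := by
    rw [← h0, E, Jint, Jint, ← intervalIntegral.integral_const_mul,
      ← intervalIntegral.integral_const_mul, ← intervalIntegral.integral_const_mul,
      ← intervalIntegral.integral_sub i2 (i0.const_mul _),
      ← intervalIntegral.integral_sub (i2.sub (i0.const_mul _)) (i1.const_mul _)]
    refine intervalIntegral.integral_congr fun t _ => ?_
    have hb0 := base_pos hk t
    have a1 : -(((0:ℕ):ℝ) + 1/2) = -(((1:ℕ):ℝ) + 1/2) + 1 := by push_cast; ring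
    have a0 : (1:ℝ)/2 = -(((1:ℕ):ℝ) + 1/2) + 1 + 1 := by push_cast; ring
    have a2 : Real.sqrt (1 - k^2 * Real.sin t ^ 2) = (1 - k^2 * Real.sin t ^ 2) ^ (-(((1:ℕ):ℝ) + 1/2) + 1 + 1) := by
      rw [Real.sqrt_eq_rpow, ← a0]
    rw [a2, a1]
    simp only [rpow_step hb0]
    generalize (1 - k^2 * Real.sin t ^ 2) ^ (-(((1:ℕ):ℝ) + 1/2)) = A
    rw [Real.cos_sq']
    push_cast
    ring
  linarith

lemma Jint_pos (j : ℕ) {m : ℝ} (hm : m < 1) : 0 < Jint j m := by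
  unfold Jint
  refine intervalIntegral.intervalIntegral_pos_of_pos_on ((Jint_cont hm j _).intervalIntegrable _ _) ?_ (by positivity)
  intro t ht
  have := Real.sin_pos_of_pos_of_lt_pi ht.1 (by linarith [ht.2, Real.pi_pos])
  exact mul_pos (pow_pos this _) (Real.rpow_pos_of_pos (base_pos hm t) _)

lemma Jint_zero_zero : Jint 0 0 = π/2 := by
  simp [Jint]

/-- comparison lemma -/
lemma ode_compare {f f' : ℝ → ℝ} {a b : ℝ} (ha : 0 < a) (h0 : f 0 = 0)
    (hd : ∀ m < 1, HasDerivAt f (f' m) m)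
    (hpos : ∀ m ∈ Ioo (0:ℝ) 1, 0 < m * (1-m) * f' m + (a * (1-m) - b * m) * f m) :
    ∀ m ∈ Ioo (0:ℝ) 1, 0 < f m := by
  have hmono : StrictMonoOn (fun m : ℝ => m ^ a * (1-m) ^ b * f m) (Ico 0 1) := by
    refine strictMonoOn_of_deriv_pos (convex_Ico 0 1) ?_ ?_
    · intro m hm
      refine ContinuousAt.continuousWithinAt ?_
      refine ContinuousAt.mul (ContinuousAt.mul ?_ ?_) (hd m hm.2).continuousAt
      · exact Real.continuousAt_rpow_const _ _ (Or.inr ha.le)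
      · exact ContinuousAt.rpow_const (by fun_prop) (Or.inl (by linarith [hm.2]))
    · rw [interior_Ico]
      intro m hm
      have hm1 : 0 < 1 - m := by linarith [hm.2]
      have h1 := (hasDerivAt_id m).rpow_const (p := a) (Or.inl hm.1.ne')
      have h2 := ((hasDerivAt_id m).const_sub 1).rpow_const (p := b) (Or.inl (by simpa using hm1.ne'))
      have h3 := (h1.mul h2).mul (hd m hm.2)
      have h4 : deriv (fun m : ℝ => m ^ a * (1-m) ^ b * f m) m = _ := h3.deriv
      rw [h4]
      simp only [Pi.mul_apply, id]
      have e1 : m ^ a = m ^ (a-1) * m := by rw [← rpow_step hm.1]; ring_nf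
      have e2 : (1-m) ^ b = (1-m) ^ (b-1) * (1-m) := by rw [← rpow_step hm1]; ring_nf
      have p1 := Real.rpow_pos_of_pos hm.1 (a-1)
      have p2 := Real.rpow_pos_of_pos hm1 (b-1)
      have := mul_pos (mul_pos p1 p2) (hpos m hm)
      rw [e1, e2]
      refine this.trans_eq ?_
      ring
  intro m hm
  have := hmono ⟨le_refl 0, one_pos⟩ ⟨hm.1.le, hm.2⟩ hm.1
  simp only [h0, mul_zero] at this
  have h2 : 0 < m ^ a * (1-m) ^ b :=
    mul_pos (Real.rpow_pos_of_pos hm.1 _) (Real.rpow_pos_of_pos (by linarith [hm.2]) _)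
  exact pos_of_mul_pos_right this h2.le

lemma rec0 {m : ℝ} (hm : m < 1) :
    m * (1-m) * (3/2) * Jint 2 m + (1 - 2*m) * Jint 1 m = (1/2) * Jint 0 m := by
  have := Jint_rec 0 hm
  norm_num at this ⊢
  exact this

lemma rec1 {m : ℝ} (hm : m < 1) :
    m * (1-m) * (5/2) * Jint 3 m + 2 * (1 - 2*m) * Jint 2 m = (3/2) * Jint 1 m := by
  have := Jint_rec 1 hm
  norm_num at this ⊢
  linarith

lemma rec2_zero : 3 * Jint 3 0 = (5/2) * Jint 2 0 := by
  have := Jint_rec 2 (m := 0) one_pos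
  norm_num at this ⊢
  linarith

lemma dJ0 {m : ℝ} (hm : m < 1) : HasDerivAt (Jint 0) ((1/2) * Jint 1 m) m := by
  have := Jint_hasDerivAt 0 hm
  norm_num at this ⊢
  exact this

lemma dJ1 {m : ℝ} (hm : m < 1) : HasDerivAt (Jint 1) ((3/2) * Jint 2 m) m := by
  have := Jint_hasDerivAt 1 hm
  norm_num at this ⊢
  exact this

lemma J1_zero : Jint 1 0 = π/4 := by
  have := rec0 (m := 0) one_pos
  rw [Jint_zero_zero] at this
  linarith

lemma J2_zero : Jint 2 0 = 3*π/16 := by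
  have := rec1 (m := 0) one_pos
  rw [J1_zero] at this
  linarith

lemma J3_zero : Jint 3 0 = 5*π/32 := by
  have := rec2_zero
  rw [J2_zero] at this
  linarith

lemma H2_pos : ∀ m ∈ Ioo (0:ℝ) 1, 0 < (8 - 7*m) * Jint 1 m - 4 * Jint 0 m := by
  refine ode_compare (a := 1) (b := -1/8)
    (f := fun m => (8 - 7*m) * Jint 1 m - 4 * Jint 0 m)
    (f' := fun m => -7 * Jint 1 m + (8 - 7*m) * ((3/2) * Jint 2 m) - 4 * ((1/2) * Jint 1 m))
    one_pos ?_ ?_ ?_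
  · simp only [Jint_zero_zero, J1_zero]; ring
  · intro m hm
    have h1 : HasDerivAt (fun m : ℝ => 8 - 7*m) (-7) m := by
      simpa using ((hasDerivAt_id m).const_mul 7).const_sub 8
    exact (h1.mul (dJ1 hm)).sub ((dJ0 hm).const_mul 4)
  · intro m hm
    have h := rec0 hm.2
    have hp : 0 < 9/8 * m^2 * Jint 1 m := by
      have := Jint_pos 1 hm.2
      have := hm.1
      positivity
    refine hp.trans_eq ?_
    linear_combination -(8 - 7*m) * h

lemma H_pos : ∀ m ∈ Ioo (0:ℝ) 1, 0 < (16 - 16*m + m^2) * Jint 1 m - (8 - m) * Jint 0 m := by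
  refine ode_compare (a := 1) (b := -3/2)
    (f := fun m => (16 - 16*m + m^2) * Jint 1 m - (8 - m) * Jint 0 m)
    (f' := fun m => ((-16 + 2*m) * Jint 1 m + (16 - 16*m + m^2) * ((3/2) * Jint 2 m))
      - ((-1) * Jint 0 m + (8 - m) * ((1/2) * Jint 1 m)))
    one_pos ?_ ?_ ?_
  · simp only [Jint_zero_zero, J1_zero]; ring
  · intro m hm
    have h1 : HasDerivAt (fun m : ℝ => 16 - 16*m + m^2) (-16 + 2*m) m := by
      simpa using (((hasDerivAt_id m).const_mul 16).const_sub 16).fun_add ((hasDerivAt_id m).fun_pow 2)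
    have h2 : HasDerivAt (fun m : ℝ => 8 - m) (-1) m := by
      simpa using (hasDerivAt_id m).const_sub 8
    exact (h1.mul (dJ1 hm)).sub (h2.mul (dJ0 hm))
  · intro m hm
    have h := rec0 hm.2
    have hp : 0 < 5/2 * m * ((8 - 7*m) * Jint 1 m - 4 * Jint 0 m) := by
      have := H2_pos m hm
      have := hm.1
      positivity
    refine hp.trans_eq ?_
    linear_combination -(16 - 16*m + m^2) * h

lemma G_pos : ∀ m ∈ Ioo (0:ℝ) 1, 0 < Jint 0 m ^ 2 - (2 - 5/2*m) * (Jint 0 m * Jint 1 m)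
    - (3/2*m - 3/2*m^2) * Jint 1 m ^ 2 := by
  refine ode_compare (a := 1/3) (b := 5/6)
    (f := fun m => Jint 0 m ^ 2 - (2 - 5/2*m) * (Jint 0 m * Jint 1 m)
      - (3/2*m - 3/2*m^2) * Jint 1 m ^ 2)
    (f' := fun m => 2 * Jint 0 m * ((1/2) * Jint 1 m)
      - ((-(5/2)) * (Jint 0 m * Jint 1 m)
        + (2 - 5/2*m) * ((1/2) * Jint 1 m * Jint 1 m + Jint 0 m * ((3/2) * Jint 2 m)))
      - ((3/2 - 3*m) * Jint 1 m ^ 2 + (3/2*m - 3/2*m^2) * (2 * Jint 1 m * ((3/2) * Jint 2 m))))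
    (by norm_num) ?_ ?_ ?_
  · simp only [Jint_zero_zero, J1_zero]; ring
  · intro m hm
    have h1 : HasDerivAt (fun m : ℝ => 2 - 5/2*m) (-(5/2)) m := by
      simpa using ((hasDerivAt_id m).const_mul (5/2)).const_sub 2
    have h2 : HasDerivAt (fun m : ℝ => 3/2*m - 3/2*m^2) (3/2 - 3*m) m := by
      refine (((hasDerivAt_id m).const_mul (3/2)).sub (((hasDerivAt_id m).fun_pow 2).const_mul (3/2))).congr_deriv ?_
      simp; ring
    have s0 : HasDerivAt (fun m => Jint 0 m ^ 2) (2 * Jint 0 m * ((1/2) * Jint 1 m)) m := by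
      simpa using (dJ0 hm).fun_pow 2
    have s1 : HasDerivAt (fun m => Jint 1 m ^ 2) (2 * Jint 1 m * ((3/2) * Jint 2 m)) m := by
      simpa using (dJ1 hm).fun_pow 2
    exact (s0.sub (h1.mul ((dJ0 hm).mul (dJ1 hm)))).sub (h2.mul s1)
  · intro m hm
    have h := rec0 hm.2
    have hp : 0 < 1/12 * Jint 0 m * ((16 - 16*m + m^2) * Jint 1 m - (8 - m) * Jint 0 m) := by
      have := H_pos m hm
      have := Jint_pos 0 hm.2
      positivity
    refine hp.trans_eq ?_
    linear_combination ((2 - 5/2*m) * Jint 0 m + 2*(3/2*m - 3/2*m^2) * Jint 1 m) * h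

noncomputable def Iot (m : ℝ) : ℝ := m * (Jint 0 m - 2 * (1-m) * Jint 1 m)

lemma iota_eq {k : ℝ} (hk : k^2 < 1) : ι₄ k = Iot (k^2) := by
  rw [ι₄, K_eq hk, E_eq hk, Iot]; ring

lemma dIot {m : ℝ} (hm : m < 1) : HasDerivAt Iot (m * Jint 1 m / 2) m := by
  have h1 : HasDerivAt (fun m : ℝ => 2 * (1-m)) (-2) m := by
    simpa using ((hasDerivAt_id m).const_sub 1).const_mul 2
  have h2 := (hasDerivAt_id m).mul ((dJ0 hm).sub (h1.mul (dJ1 hm)))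
  have h3 : HasDerivAt Iot _ m := h2
  refine h3.congr_deriv ?_
  simp only [id, Pi.sub_apply, Pi.mul_apply]
  linear_combination (-2) * rec0 hm

lemma Iot_mono : StrictMonoOn Iot (Ico 0 1) := by
  refine strictMonoOn_of_deriv_pos (convex_Ico 0 1) ?_ ?_
  · intro m hm
    exact (dIot hm.2).continuousAt.continuousWithinAt
  · rw [interior_Ico]
    intro m hm
    rw [(dIot hm.2).deriv]
    have := Jint_pos 1 hm.2
    have := hm.1
    positivity

lemma Iot_zero : Iot 0 = 0 := by simp [Iot]

lemma Iot_pos {m : ℝ} (hm : m ∈ Ioo (0:ℝ) 1) : 0 < Iot m := by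
  rw [← Iot_zero]
  exact Iot_mono ⟨le_refl 0, one_pos⟩ ⟨hm.1.le, hm.2⟩ hm.1

noncomputable def wfun (m : ℝ) : ℝ := (m^2 * Jint 0 m - Iot m * (8 - m)) / (12 * Iot m ^ ((3:ℝ)/2))

lemma W_eq {k : ℝ} (hk : k^2 < 1) : W22m k = wfun (k^2) := by
  rw [W22m, wfun, iota_eq hk, K_eq hk]
  have : 1 - k^2 ≠ 0 := by linarith
  rw [← mul_div_mul_right ((k^2)^2 * Jint 0 (k^2) - Iot (k^2) * (8 - k^2)) (12 * Iot (k^2) ^ ((3:ℝ)/2)) this]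
  congr 1
  ring

lemma three_half {x : ℝ} (hx : 0 < x) : x ^ ((3:ℝ)/2) = x ^ ((1:ℝ)/2) * x := by
  rw [← rpow_step hx]; norm_num

lemma wfun_mono : StrictMonoOn wfun (Ioo 0 1) := by
  have hd : ∀ m ∈ Ioo (0:ℝ) 1, ∃ d, 0 < d ∧ HasDerivAt wfun d m := by
    intro m hm
    have hI := Iot_pos hm
    have hG := G_pos m hm
    have hsq : HasDerivAt (fun m : ℝ => m^2) (2*m) m := by simpa using (hasDerivAt_id m).fun_pow 2
    have h8 : HasDerivAt (fun m : ℝ => 8 - m) (-1) m := by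
      simpa using (hasDerivAt_id m).const_sub 8
    have hN := (hsq.mul (dJ0 hm.2)).sub ((dIot hm.2).mul h8)
    have hD := ((dIot hm.2).rpow_const (p := (3:ℝ)/2) (Or.inl hI.ne')).const_mul 12
    have hr := Real.rpow_pos_of_pos hI ((1:ℝ)/2)
    have hden : 12 * Iot m ^ ((3:ℝ)/2) ≠ 0 := by
      have := Real.rpow_pos_of_pos hI ((3:ℝ)/2)
      positivity
    have hw := hN.div hD hden
    refine ⟨_, ?_, hw⟩
    refine div_pos ?_ (by positivity)
    have e : (3:ℝ)/2 - 1 = 1/2 := by norm_num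
    simp only [Pi.mul_apply, Pi.sub_apply]
    rw [e, three_half hI]
    have hm0 := hm.1
    have hp : 0 < 12 * Iot m ^ ((1:ℝ)/2) * (3 * m^2 * (Jint 0 m ^ 2 - (2 - 5/2*m) * (Jint 0 m * Jint 1 m)
    - (3/2*m - 3/2*m^2) * Jint 1 m ^ 2)) := by positivity
    refine hp.trans_eq ?_
    generalize Iot m ^ ((1:ℝ)/2) = A
    rw [Iot]
    ring
  refine strictMonoOn_of_deriv_pos (convex_Ioo 0 1) ?_ ?_
  · intro m hm
    obtain ⟨d, _, h⟩ := hd m hm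
    exact h.continuousAt.continuousWithinAt
  · rw [interior_Ioo]
    intro m hm
    obtain ⟨d, h0, h⟩ := hd m hm
    rw [h.deriv]; exact h0

lemma contJ (j : ℕ) : ContinuousAt (Jint j) 0 := (Jint_hasDerivAt j one_pos).continuousAt

lemma wfun_zero : Tendsto wfun (𝓝[>] 0) (𝓝 (-1 / Real.sqrt π)) := by
  set u : ℝ → ℝ := fun m => 3 * (1-m) * Jint 2 m - 2 * Jint 1 m with hu
  set V : ℝ → ℝ := fun m => 30 * (1-m) * Jint 3 m - (21 + 3*m) * Jint 2 m - 4 * Jint 1 m + u m with hV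
  have cu : ContinuousAt u 0 := by
    have := contJ 1
    have := contJ 2
    fun_prop
  have cV : ContinuousAt V 0 := by
    have := contJ 1
    have := contJ 2
    have := contJ 3
    fun_prop
  have u0 : u 0 = π/16 := by simp only [hu, J1_zero, J2_zero]; ring
  have V0 : V 0 = -(3*π/16) := by simp only [hV, u0, J1_zero, J2_zero, J3_zero]; ring
  have cq : ContinuousAt (fun m => V m / (12 * u m ^ ((3:ℝ)/2))) 0 := by
    refine cV.div (continuousAt_const.mul (cu.rpow_const (Or.inr (by norm_num)))) ?_
    rw [u0]
    have := Real.pi_pos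
    positivity
  have val : V 0 / (12 * u 0 ^ ((3:ℝ)/2)) = -1 / Real.sqrt π := by
    have hpi := Real.pi_pos
    rw [u0, V0, three_half (by positivity), ← Real.sqrt_eq_rpow, Real.sqrt_div hpi.le]
    have : Real.sqrt 16 = 4 := by
      rw [show (16:ℝ) = 4^2 by norm_num]; exact Real.sqrt_sq (by norm_num)
    rw [this]
    have := Real.sqrt_pos.2 hpi
    field_simp
    norm_num
  rw [← val]
  refine (cq.tendsto.mono_left nhdsWithin_le_nhds).congr' ?_
  filter_upwards [Ioo_mem_nhdsGT (one_pos : (0:ℝ) < 1)] with m hm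
  have hI := Iot_pos hm
  have hIu : Iot m = m^2 * u m := by
    simp only [Iot, hu]
    linear_combination (-2*m) * rec0 hm.2
  have hm0 := hm.1
  have hu0 : 0 < u m := by
    rw [hIu] at hI
    exact pos_of_mul_pos_right hI (by positivity)
  have hp : (m^2 * u m) ^ ((3:ℝ)/2) = m^3 * u m ^ ((3:ℝ)/2) := by
    rw [Real.mul_rpow (by positivity) hu0.le]
    congr 1
    rw [← Real.rpow_natCast, ← Real.rpow_mul hm0.le, ← Real.rpow_natCast]
    norm_num
  have hnum : m^2 * Jint 0 m - Iot m * (8 - m) = m^3 * V m := by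
    rw [hIu]
    simp only [hV, hu]
    linear_combination (-2*m^2) * rec0 hm.2 - (12*m^2) * rec1 hm.2
  have := Real.rpow_pos_of_pos hu0 ((3:ℝ)/2)
  rw [wfun, hnum, hIu, hp]
  field_simp

lemma E_le (k : ℝ) : E k ≤ π/2 := by
  have : E k ≤ ∫ t in (0:ℝ)..(π/2), (1:ℝ) := by
    refine intervalIntegral.integral_mono_on (by positivity)
      (Continuous.intervalIntegrable (by fun_prop) _ _) intervalIntegrable_const ?_
    intro t _
    rw [Real.sqrt_le_one]
    nlinarith [mul_nonneg (sq_nonneg k) (sq_nonneg (Real.sin t))]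
  simpa using this

lemma K_ge {k : ℝ} (hk : k ∈ Ioo (0:ℝ) 1) : -Real.log (1-k) / 2 ≤ K k := by
  have hk2 : k^2 < 1 := by nlinarith [hk.1, hk.2]
  have hpos : ∀ t : ℝ, 0 < 1 - k * Real.sin t := fun t => by
    nlinarith [Real.sin_le_one t, Real.neg_one_le_sin t, hk.1, hk.2]
  have hd : ∀ t : ℝ, HasDerivAt (fun t => -Real.log (1 - k * Real.sin t) / 2)
      (k * Real.cos t / (2 * (1 - k * Real.sin t))) t := by
    intro t
    have h1 := ((Real.hasDerivAt_sin t).const_mul k).const_sub 1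
    refine ((h1.log (hpos t).ne').neg.div_const 2).congr_deriv ?_
    have := hpos t
    field_simp
  have hc : Continuous (fun t : ℝ => k * Real.cos t / (2 * (1 - k * Real.sin t))) :=
    Continuous.div (by fun_prop) (by fun_prop) (fun t => by have := hpos t; positivity)
  have hc2 : Continuous (fun t : ℝ => 1 / Real.sqrt (1 - k^2 * Real.sin t ^ 2)) :=
    Continuous.div (by fun_prop) (by fun_prop)
      (fun t => (Real.sqrt_pos.2 (base_pos hk2 t)).ne')
  have h_ftc := intervalIntegral.integral_eq_sub_of_hasDerivAt (a := 0) (b := π/2)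
    (fun t _ => hd t) (hc.intervalIntegrable _ _)
  have : ∫ t in (0:ℝ)..(π/2), k * Real.cos t / (2 * (1 - k * Real.sin t)) ≤ K k := by
    refine intervalIntegral.integral_mono_on (by positivity) (hc.intervalIntegrable _ _)
      (hc2.intervalIntegrable _ _) ?_
    intro t ht
    have hb := base_pos hk2 t
    have hs := Real.sqrt_pos.2 hb
    rw [div_le_div_iff₀ (by have := hpos t; positivity) hs]
    have hcos : 0 ≤ Real.cos t := Real.cos_nonneg_of_mem_Icc ⟨by linarith [ht.1, Real.pi_pos], ht.2⟩
    have h1 : Real.cos t ≤ Real.sqrt (1 - k^2 * Real.sin t ^ 2) := by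
      apply Real.le_sqrt_of_sq_le
      rw [Real.cos_sq']
      nlinarith [sq_nonneg (Real.sin t)]
    have h2 := Real.sq_sqrt hb.le
    have h3 : k * Real.cos t ≤ Real.sqrt (1 - k^2 * Real.sin t ^ 2) := by
      nlinarith [hk.1, hk.2]
    have h4 : k * Real.sin t ≤ 1 := by linarith [hpos t]
    nlinarith [hpos t]
  rw [h_ftc] at this
  simpa using this

lemma K_top : Tendsto K (𝓝[<] 1) atTop := by
  have h1 : Tendsto (fun k : ℝ => 1 - k) (𝓝[<] 1) (𝓝[>] 0) := by
    refine tendsto_nhdsWithin_iff.2 ⟨?_, ?_⟩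
    · have : ContinuousAt (fun k : ℝ => 1 - k) 1 := by fun_prop
      have h := this.tendsto
      simp only [sub_self] at h
      exact h.mono_left nhdsWithin_le_nhds
    · filter_upwards [self_mem_nhdsWithin] with k hk
      have : k < 1 := hk
      exact sub_pos.2 this
  have h2 := Real.tendsto_log_nhdsGT_zero.comp h1
  have h3 : Tendsto (fun k : ℝ => -Real.log (1-k) / 2) (𝓝[<] 1) atTop :=
    (tendsto_neg_atBot_atTop.comp h2).atTop_div_const two_pos
  refine tendsto_atTop_mono' _ ?_ h3
  filter_upwards [Ioo_mem_nhdsLT (one_pos : (0:ℝ) < 1)] with k hk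
  exact K_ge hk

lemma sq_mem {k : ℝ} (hk : k ∈ Ioo (0:ℝ) 1) : k^2 ∈ Ioo (0:ℝ) 1 :=
  ⟨pow_pos hk.1 2, by nlinarith [hk.1, hk.2]⟩

lemma iota_ge {k : ℝ} (hk : k ∈ Ioo (0:ℝ) 1) : K k - π ≤ ι₄ k := by
  have h2 := sq_mem hk
  have := Jint_pos 0 h2.2
  rw [← K_eq h2.2] at this
  rw [ι₄]
  nlinarith [E_le k, h2.2]

lemma iota_top : Tendsto ι₄ (𝓝[<] 1) atTop := by
  refine tendsto_atTop_mono' _ ?_ (tendsto_atTop_add_const_right _ (-π) K_top)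
  filter_upwards [Ioo_mem_nhdsLT (one_pos : (0:ℝ) < 1)] with k hk
  exact iota_ge hk

lemma W_one : Tendsto W22m (𝓝[<] 1) (𝓝 0) := by
  have h := ((tendsto_rpow_neg_atTop (y := 1/2) (by norm_num)).comp iota_top).const_mul (10/12 : ℝ)
  rw [mul_zero] at h
  refine squeeze_zero_norm' ?_ h
  filter_upwards [Ioo_mem_nhdsLT (one_pos : (0:ℝ) < 1), iota_top.eventually_ge_atTop π] with k hk hpi
  have h2 := sq_mem hk
  have hI : 0 < ι₄ k := lt_of_lt_of_le Real.pi_pos hpi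
  have hg := iota_ge hk
  have hK := Jint_pos 0 h2.2
  rw [← K_eq h2.2] at hK
  rw [W_eq h2.2, wfun, ← K_eq h2.2, ← iota_eq h2.2, three_half hI, Function.comp_apply, Real.rpow_neg hI.le]
  have hr := Real.rpow_pos_of_pos hI ((1:ℝ)/2)
  rw [Real.norm_eq_abs, abs_div, abs_of_pos (by positivity : 0 < 12 * (ι₄ k ^ ((1:ℝ)/2) * ι₄ k)),
    div_le_iff₀ (by positivity)]
  have e : 10/12 * (ι₄ k ^ ((1:ℝ)/2))⁻¹ * (12 * (ι₄ k ^ ((1:ℝ)/2) * ι₄ k)) = 10 * ι₄ k := by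
    field_simp
  rw [e, abs_le]
  have a1 : 0 ≤ (k^2)^2 * K k := by positivity
  have a2 : (k^2)^2 * K k ≤ K k := by
    have : (k^2)^2 ≤ 1 := pow_le_one₀ h2.1.le h2.2.le
    nlinarith
  have a3 : 0 ≤ ι₄ k * k^2 := by positivity
  have a4 : ι₄ k * k^2 ≤ ι₄ k := by nlinarith [h2.2]
  constructor <;> nlinarith

lemma sq_tendsto : Tendsto (fun k : ℝ => k^2) (𝓝[>] 0) (𝓝[>] 0) := by
  refine tendsto_nhdsWithin_iff.2 ⟨?_, ?_⟩
  · have : ContinuousAt (fun k : ℝ => k^2) 0 := by fun_prop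
    have h := this.tendsto
    simp only [ne_eq, OfNat.ofNat_ne_zero, not_false_eq_true, zero_pow] at h
    exact h.mono_left nhdsWithin_le_nhds
  · filter_upwards [self_mem_nhdsWithin] with k hk
    have : 0 < k := hk
    exact pow_pos this 2

lemma W_zero : Tendsto W22m (𝓝[>] 0) (𝓝 (-1 / Real.sqrt π)) := by
  refine (wfun_zero.comp sq_tendsto).congr' ?_
  filter_upwards [Ioo_mem_nhdsGT (one_pos : (0:ℝ) < 1)] with k hk
  exact (W_eq (sq_mem hk).2).symm

lemma Y_zero : Tendsto Y22m (𝓝[>] 0) (𝓝 0) := by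
  have h1 : Tendsto Iot (𝓝[>] 0) (𝓝 0) := by
    have := (dIot one_pos).continuousAt.tendsto
    rw [Iot_zero] at this
    exact this.mono_left nhdsWithin_le_nhds
  have h2 : Tendsto (fun k : ℝ => -Real.sqrt (Iot (k^2))) (𝓝[>] 0) (𝓝 0) := by
    have := ((h1.comp sq_tendsto).sqrt).neg
    simpa using this
  refine h2.congr' ?_
  filter_upwards [Ioo_mem_nhdsGT (one_pos : (0:ℝ) < 1)] with k hk
  rw [Y22m, iota_eq (sq_mem hk).2]

lemma Y_one : Tendsto Y22m (𝓝[<] 1) atBot :=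
  tendsto_neg_atTop_atBot.comp (Real.tendsto_sqrt_atTop.comp iota_top)

lemma sq_lt_of {a b : ℝ} (ha : a ∈ Ioo (0:ℝ) 1) (h : a < b) : a^2 < b^2 := by
  have := ha.1
  nlinarith

lemma Y_anti : StrictAntiOn Y22m (Ioo 0 1) := by
  intro a ha b hb hab
  have ha2 := sq_mem ha
  have hb2 := sq_mem hb
  rw [Y22m, Y22m, iota_eq ha2.2, iota_eq hb2.2, neg_lt_neg_iff]
  exact Real.sqrt_lt_sqrt (Iot_pos ha2).le
    (Iot_mono ⟨ha2.1.le, ha2.2⟩ ⟨hb2.1.le, hb2.2⟩ (sq_lt_of ha hab))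

lemma W_mono : StrictMonoOn W22m (Ioo 0 1) := by
  intro a ha b hb hab
  rw [W_eq (sq_mem ha).2, W_eq (sq_mem hb).2]
  exact wfun_mono (sq_mem ha) (sq_mem hb) (sq_lt_of ha hab)

lemma Y_cont : ContinuousOn Y22m (Ioo 0 1) := by
  have : ContinuousOn (fun k : ℝ => -Real.sqrt (Iot (k^2))) (Ioo 0 1) := by
    intro k hk
    refine ContinuousAt.continuousWithinAt ?_
    have h1 : ContinuousAt Iot (k^2) := (dIot (sq_mem hk).2).continuousAt
    have h2 : ContinuousAt (fun k : ℝ => Iot (k^2)) k :=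
      ContinuousAt.comp (f := fun k : ℝ => k^2) h1 (by fun_prop)
    exact h2.sqrt.neg
  refine this.congr fun k hk => ?_
  rw [Y22m, iota_eq (sq_mem hk).2]

lemma Y_neg {k : ℝ} (hk : k ∈ Ioo (0:ℝ) 1) : Y22m k < 0 := by
  rw [Y22m, iota_eq (sq_mem hk).2]
  exact neg_lt_zero.2 (Real.sqrt_pos.2 (Iot_pos (sq_mem hk)))

lemma Y_surj : Iio 0 ⊆ Y22m '' Ioo 0 1 :=
  isPreconnected_Ioo.intermediate_value_Iio (l₁ := 𝓝[<] (1:ℝ)) (l₂ := 𝓝[>] (0:ℝ))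
    (le_principal_iff.2 (Ioo_mem_nhdsLT one_pos)) (le_principal_iff.2 (Ioo_mem_nhdsGT one_pos))
    Y_cont Y_one Y_zero

/-- `Y22m` strictly decreases on `(0,1)` from `0` to `−∞`, `W22m` strictly increases
on `(0,1)` from `−1/√π` to `0`, and the parametric curve
`{(Y22m(k), W22m(k)) : k ∈ (0,1)}` is the graph of a function `W_conj^{22−}` strictly
decreasing from `0` to `−1/√π` on `(−∞, 0)`. -/
theorem curve_CN_minus_graph :
    StrictAntiOn Y22m (Set.Ioo 0 1) ∧
    StrictMonoOn W22m (Set.Ioo 0 1) ∧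
    Tendsto Y22m (nhdsWithin 0 (Set.Ioi 0)) (nhds 0) ∧
    Tendsto W22m (nhdsWithin 0 (Set.Ioi 0)) (nhds (-1 / Real.sqrt π)) ∧
    Tendsto Y22m (nhdsWithin 1 (Set.Iio 1)) atBot ∧
    Tendsto W22m (nhdsWithin 1 (Set.Iio 1)) (nhds 0) ∧
    ∃ Wconj : ℝ → ℝ,
      StrictAntiOn Wconj (Set.Iio 0) ∧
      Tendsto Wconj atBot (nhds 0) ∧
      Tendsto Wconj (nhdsWithin 0 (Set.Iio 0)) (nhds (-1 / Real.sqrt π)) ∧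
      (fun k => (Y22m k, W22m k)) '' (Set.Ioo 0 1) =
        (fun Y => (Y, Wconj Y)) '' (Set.Iio 0) := by
  refine ⟨Y_anti, W_mono, Y_zero, W_zero, Y_one, W_one, ?_⟩
  have hs : ∀ y : ℝ, ∃ k : ℝ, y < 0 → k ∈ Ioo (0:ℝ) 1 ∧ Y22m k = y := by
    intro y
    by_cases hy : y < 0
    · obtain ⟨k, hk, hky⟩ := Y_surj hy
      exact ⟨k, fun _ => ⟨hk, hky⟩⟩
    · exact ⟨0, fun h => absurd h hy⟩
  choose g hg using hs
  have hgt : ∀ y < 0, ∀ k ∈ Ioo (0:ℝ) 1, y < Y22m k → k < g y := by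
    intro y hy k hk h
    rw [← (hg y hy).2] at h
    exact (Y_anti.lt_iff_gt (hg y hy).1 hk).1 h
  have hlt : ∀ y < 0, ∀ k ∈ Ioo (0:ℝ) 1, Y22m k < y → g y < k := by
    intro y hy k hk h
    rw [← (hg y hy).2] at h
    exact (Y_anti.lt_iff_gt hk (hg y hy).1).1 h
  have g1 : Tendsto g atBot (𝓝[<] 1) := by
    rw [tendsto_nhdsWithin_iff]
    constructor
    · rw [tendsto_order]
      constructor
      · intro a ha
        set k := max a (1/2) with hkdef
        have hk : k ∈ Ioo (0:ℝ) 1 := ⟨lt_of_lt_of_le (by norm_num) (le_max_right _ _), max_lt ha (by norm_num)⟩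
        filter_upwards [eventually_lt_atBot (Y22m k)] with y hy
        exact lt_of_le_of_lt (le_max_left _ _) (hgt y (hy.trans (Y_neg hk)) k hk hy)
      · intro a ha
        filter_upwards [eventually_lt_atBot 0] with y hy
        exact (hg y hy).1.2.trans ha
    · filter_upwards [eventually_lt_atBot 0] with y hy
      exact (hg y hy).1.2
  have g0 : Tendsto g (𝓝[<] 0) (𝓝[>] 0) := by
    rw [tendsto_nhdsWithin_iff]
    constructor
    · rw [tendsto_order]
      constructor
      · intro a ha
        filter_upwards [self_mem_nhdsWithin] with y hy
        exact ha.trans (hg y hy).1.1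
      · intro a ha
        set k := min a (1/2) with hkdef
        have hk : k ∈ Ioo (0:ℝ) 1 := ⟨lt_min ha (by norm_num), lt_of_le_of_lt (min_le_right _ _) (by norm_num)⟩
        filter_upwards [Ioo_mem_nhdsLT (Y_neg hk)] with y hy
        exact lt_of_lt_of_le (hlt y hy.2 k hk hy.1) (min_le_left _ _)
    · filter_upwards [self_mem_nhdsWithin] with y hy
      exact (hg y hy).1.1
  refine ⟨fun y => W22m (g y), ?_, W_one.comp g1, W_zero.comp g0, ?_⟩
  · intro y1 h1 y2 h2 h
    refine W_mono (hg y2 h2).1 (hg y1 h1).1 (hgt y1 h1 _ (hg y2 h2).1 ?_)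
    rw [(hg y2 h2).2]; exact h
  · ext ⟨y, w⟩
    simp only [mem_image, Prod.mk.injEq]
    constructor
    · rintro ⟨k, hk, rfl, rfl⟩
      refine ⟨Y22m k, Y_neg hk, rfl, ?_⟩
      have := hg _ (Y_neg hk)
      rw [Y_anti.injOn this.1 hk this.2]
    · rintro ⟨y', hy', rfl, rfl⟩
      exact ⟨g y', (hg y' hy').1, (hg y' hy').2, rfl⟩
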